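/- A subset X of the full blur shift Σ (with the subspace topology inherited from the topology generated by the generalized cylinders) is compact if and only if it is sequentially compact. -/

import Mathlib

open Set Filter Topology

namespace BlurPaper

/-- The extended alphabet `Ā = A ⊕ V`, where each blurred set `H ∈ V` is regarded
as a new symbol `H̃`. -/
abbrev Symb (A : Type*) (V : Set (Set A)) := A ⊕ {H : Set A // H ∈ V}

/-- `V` is a family of blurred sets: every member is infinite and two distinct members
have finite intersection. -/
def IsBlurFamily {A : Type*} (V : Set (Set A)) : Prop :=
  (∀ H ∈ V, H.Infinite) ∧ ∀ G ∈ V, ∀ H ∈ V, G ≠ H → (G ∩ H).Finite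

/-- The full blur shift `Σ`: sequences over `Ā` such that a blur symbol is followed
by the same blur symbol. -/
def FullBlur (A : Type*) (V : Set (Set A)) : Set (ℕ → Symb A V) :=
  {x | ∀ (i : ℕ) (H : {H : Set A // H ∈ V}), x i = Sum.inr H → x (i + 1) = Sum.inr H}

/-- Generalized cylinder `Z(α)`. -/
def Z (A : Type*) (V : Set (Set A)) (α : List A) : Set (FullBlur A V) :=
  {x | ∀ i : Fin α.length, x.1 i = Sum.inl (α.get i)}

/-- Generalized cylinder `Z(α, H, F)`. -/
def ZH (A : Type*) (V : Set (Set A)) (α : List A) (H : {H : Set A // H ∈ V})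
    (F : Set A) : Set (FullBlur A V) :=
  {x | (∀ i : Fin α.length, x.1 i = Sum.inl (α.get i)) ∧
    (x.1 α.length = Sum.inr H ∨ ∃ a ∈ H.1 \ F, x.1 α.length = Sum.inl a)}

/-- The collection of all generalized cylinders. -/
def Cylinders (A : Type*) (V : Set (Set A)) : Set (Set (FullBlur A V)) :=
  {U | ∃ α : List A, U = Z A V α} ∪
  {U | ∃ (α : List A) (H : {H : Set A // H ∈ V}) (F : Set A),
    F ⊆ H.1 ∧ F.Finite ∧ U = ZH A V α H F}

/-- The topology on the full blur shift generated by the generalized cylinders. -/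
def tau (A : Type*) (V : Set (Set A)) : TopologicalSpace (FullBlur A V) :=
  TopologicalSpace.generateFrom (Cylinders A V)

/-- The shift map on the full blur shift. -/
def shift (A : Type*) (V : Set (Set A)) : FullBlur A V → FullBlur A V :=
  fun x => ⟨fun i => x.1 (i + 1), fun i H h => x.2 (i + 1) H h⟩

/-- The shift map on `A^ℕ`. -/
def shiftSeq (A : Type*) : (ℕ → A) → ℕ → A := fun x i => x (i + 1)

/-- The prodiscrete topology on `A^ℕ` (product of discrete topologies). -/
def prodDiscrete (A : Type*) : TopologicalSpace (ℕ → A) :=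
  @Pi.topologicalSpace ℕ (fun _ => A) fun _ => ⊥

/-- A (classical) shift space over `A`: closed in the prodiscrete topology and
invariant under the shift map. -/
def IsShiftSpace {A : Type*} (Λ : Set (ℕ → A)) : Prop :=
  @IsClosed _ (prodDiscrete A) Λ ∧ ∀ x ∈ Λ, shiftSeq A x ∈ Λ

/-- `w ∈ B(Y)`: the finite word `w` appears as an initial word of some element of `Y`. -/
def InLang {A : Type*} (Y : Set (ℕ → A)) (w : List A) : Prop :=
  ∃ x ∈ Y, ∀ i : Fin w.length, x i = w.get i

/-- The follower set `F_Y(w) = {a : w a ∈ B(Y)}`. -/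
def Fol {A : Type*} (Y : Set (ℕ → A)) (w : List A) : Set A :=
  {a | InLang Y (w ++ [a])}

/-- The predecessor set `P_Y(a) = {b : b a ∈ B(Y)}`. -/
def Pred {A : Type*} (Y : Set (ℕ → A)) (a : A) : Set A :=
  {b | InLang Y [b, a]}

/-- `B₁(Y)`: the set of letters occurring in sequences of `Y`. -/
def letters {A : Type*} (Y : Set (ℕ → A)) : Set A :=
  {a | ∃ x ∈ Y, ∃ i, x i = a}

/-- The canonical embedding `A^ℕ → Σ`. -/
def embed (A : Type*) (V : Set (Set A)) : (ℕ → A) → FullBlur A V :=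
  fun x => ⟨fun i => Sum.inl (x i), fun _ _ h => absurd h (by simp)⟩

/-- The point `(a₀ … a_{n-1} H̃ H̃ H̃ …)` of the full blur shift. -/
def wordBlur {A : Type*} {V : Set (Set A)} (α : List A) (H : {H : Set A // H ∈ V}) :
    FullBlur A V :=
  ⟨fun i => if h : i < α.length then Sum.inl (α.get ⟨i, h⟩) else Sum.inr H, by
    intro i K hK
    by_cases h : i < α.length
    · simp only [dif_pos h] at hK
      exact absurd hK (by simp)
    · simp only [dif_neg h] at hK
      simp only [dif_neg (by omega : ¬ i + 1 < α.length)]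
      exact hK⟩

/-- The boundary `∂Y`: points `(a₀ … a_{n-1} H̃ H̃ …)` with `a₀ … a_{n-1} ∈ B(Y)` and
`F_Y(a₀ … a_{n-1}) ∩ H` infinite. -/
def boundary (A : Type*) (V : Set (Set A)) (Y : Set (ℕ → A)) : Set (FullBlur A V) :=
  {z | ∃ (α : List A) (H : {H : Set A // H ∈ V}),
    z = wordBlur α H ∧ InLang Y α ∧ (Fol Y α ∩ H.1).Infinite}

/-- The blur shift space `Σ_Y = Y ∪ ∂Y` of `Y` with resolution `V`. -/
def SigmaOf (A : Type*) (V : Set (Set A)) (Y : Set (ℕ → A)) : Set (FullBlur A V) :=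
  embed A V '' Y ∪ boundary A V Y

/-- The subspace topology inherited from the full blur shift. -/
def subTau (A : Type*) (V : Set (Set A)) (X : Set (FullBlur A V)) :
    TopologicalSpace X :=
  TopologicalSpace.induced Subtype.val (tau A V)

/-- `V_Λ`: the blurred sets that appear in `Σ_Λ`, i.e. those meeting `B₁(Λ)` in an
infinite set. -/
def VLam (A : Type*) (V : Set (Set A)) (Λ : Set (ℕ → A)) : Set (Set A) :=
  {H | H ∈ V ∧ (letters Λ ∩ H).Infinite}

/-!
Both properties are equivalent to countable compactness.

The space need not be first countable, since a blurred set may be uncountable, but a sequence meets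
a blurred set in countably many letters only, so the traces of neighborhoods on a countable set are
countably generated. Hence every cluster point of a sequence is the limit of a subsequence.

Conversely, let `X` be countably compact and let `U` be an ultrafilter containing `X` and `Z(α)`.
The letters and the blur symbols each form a discrete subspace of the extended alphabet, the latter
closed, so the symbols that follow `α` in `X` form a compact set. Along `U` the symbol following `α`
therefore converges: to a blur symbol, and then `U` converges in `X`, or to a letter `a`, and then
`Z(αa) ∈ U`. If the first case never occurs, `U` contains the cylinders of ever longer words; these
are closed, so by countable compactness they have a common point in `X`, to which `U` converges.
-/

section CountablyCompact

variable {E F : Type*} [TopologicalSpace E] [TopologicalSpace F] {s t : Set E}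

theorem isCountablyCompact_inter_of_isClosed (hs : IsCountablyCompact s) (ht : IsClosed t) :
    IsCountablyCompact (s ∩ t) := by
  intro f _ _ hf
  obtain ⟨hfs, hft⟩ := le_inf_iff.1 (hf.trans inf_principal.ge)
  obtain ⟨a, ha, haf⟩ := hs hfs
  exact ⟨a, ⟨ha, isClosed_iff_clusterPt.1 ht a (haf.mono hft)⟩, haf⟩

theorem isCountablyCompact_image_of_continuousOn {g : E → F} (hs : IsCountablyCompact s)
    (hg : ContinuousOn g s) : IsCountablyCompact (g '' s) := by
  rw [← range_domRestrict, ← image_univ]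
  exact (isCountablyCompact_iff_isCountablyCompact_univ.1 hs).image hg.domRestrict

theorem exists_mem_forall_mem_of_isClosed {C : ℕ → Set E} (hs : IsCountablyCompact s)
    (hC : ∀ n, IsClosed (C n)) {f : Filter E} [f.NeBot] (hsf : s ∈ f) (hCf : ∀ n, C n ∈ f) :
    ∃ a ∈ s, ∀ n, a ∈ C n := by
  have hf : f ≤ 𝓟 s ⊓ ⨅ n, 𝓟 (C n) :=
    le_inf (le_principal_iff.2 hsf) (le_iInf fun n => le_principal_iff.2 (hCf n))
  have := neBot_of_le hf
  obtain ⟨a, ha, hac⟩ := hs (f := 𝓟 s ⊓ ⨅ n, 𝓟 (C n)) inf_le_left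
  exact ⟨a, ha, fun n => isClosed_iff_clusterPt.1 (hC n) a
    (hac.mono (inf_le_right.trans (iInf_le _ n)))⟩

theorem finite_of_isCountablyCompact_of_isDiscrete (hs : IsCountablyCompact s)
    (hd : IsDiscrete s) : s.Finite := by
  by_contra hinf
  obtain ⟨a, ha, hacc⟩ := hs.exists_accPt_of_infinite Subset.rfl hinf
  have heq : ∀ᶠ b in 𝓝 a, b ∈ s → b = a :=
    mem_nhdsWithin_iff_eventually.1 (singleton_mem_nhdsWithin_of_mem_discrete hd ha)
  obtain ⟨b, ⟨hne, hbs⟩, hb⟩ := ((accPt_iff_frequently.1 hacc).and_eventually heq).exists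
  exact hne (hb hbs)

theorem isCompact_of_forall_isCompact_diff {K : Set E} (hK : IsCompact K)
    (hdiff : ∀ U, IsOpen U → K ⊆ U → IsCompact (s \ U)) (hKs : K ⊆ s) : IsCompact s := by
  classical
  refine isCompact_of_finite_subcover fun U hU hsU => ?_
  obtain ⟨t₁, ht₁⟩ := hK.elim_finite_subcover U hU (hKs.trans hsU)
  obtain ⟨t₂, ht₂⟩ := (hdiff _ (isOpen_biUnion fun i _ => hU i) ht₁).elim_finite_subcover U hU
    (sdiff_subset.trans hsU)
  refine ⟨t₁ ∪ t₂, ?_⟩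
  rw [Finset.set_biUnion_union]
  exact sdiff_subset_iff.1 ht₂

theorem isCompact_of_isCountablyCompact_of_isDiscrete {D : Set E} (hD : IsClosed D)
    (hd : IsDiscrete D) (hd' : IsDiscrete Dᶜ) (hs : IsCountablyCompact s) : IsCompact s := by
  have hfin : (s ∩ D).Finite := finite_of_isCountablyCompact_of_isDiscrete
    (isCountablyCompact_inter_of_isClosed hs hD) (hd.mono inter_subset_right)
  refine isCompact_of_forall_isCompact_diff hfin.isCompact (fun U hU hDU => ?_) inter_subset_left
  have hsub : s \ U ⊆ Dᶜ := fun a ha haD => ha.2 (hDU ⟨ha.1, haD⟩)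
  exact (finite_of_isCountablyCompact_of_isDiscrete
    (isCountablyCompact_inter_of_isClosed hs hU.isClosed_compl) (hd'.mono hsub)).isCompact

theorem isSeqCompact_of_isCountablyCompact
    (hgen : ∀ a ∈ s, ∀ S ⊆ s, S.Countable → (𝓝[S] a).IsCountablyGenerated)
    (hs : IsCountablyCompact s) : IsSeqCompact s := by
  intro x hx
  obtain ⟨a, ha, hax⟩ := hs (f := map x atTop) (tendsto_principal.2 (.of_forall hx))
  have := hgen a ha (range x) (range_subset_iff.2 hx) (countable_range x)
  have hne : (𝓝[range x] a ⊓ map x atTop).NeBot := by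
    rwa [nhdsWithin, inf_assoc, inf_eq_right.2 (le_principal_iff.2 range_mem_map)]
  obtain ⟨φ, hφ, hlim⟩ := subseq_tendsto_of_neBot hne
  exact ⟨a, ha, φ, hφ, hlim.mono_right nhdsWithin_le_nhds⟩

end CountablyCompact

theorem isCountablyGenerated_cofinite_inf_principal {α : Type*} {S : Set α} (hS : S.Countable) :
    (cofinite ⊓ 𝓟 S).IsCountablyGenerated := by
  have := hS.to_subtype
  have : (cofinite : Filter S).IsCountablyGenerated :=
    HasCountableBasis.isCountablyGenerated ⟨hasBasis_cofinite, Countable.ofPred_finite⟩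
  rw [← Subtype.range_coe (s := S), ← map_comap, Subtype.val_injective.comap_cofinite_eq]
  infer_instance

section BlurShift

variable {A : Type*} {V : Set (Set A)}

/-- The topology on the extended alphabet in which letters are isolated and the neighborhoods of
`H̃` contain `H̃` together with all but finitely many letters of `H`. The cylinder `Z(α, H, F)`
constrains the symbol following `α` to such a neighborhood. -/
local instance symbTopology : TopologicalSpace (Symb A V) :=
  .mkOfNhds (Sum.elim (fun a => pure (.inl a))
    fun H => pure (.inr H) ⊔ map .inl (cofinite ⊓ 𝓟 H.1))

theorem nhds_symb (s : Symb A V) :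
    𝓝 s = Sum.elim (fun a => pure (.inl a))
      (fun H => pure (.inr H) ⊔ map .inl (cofinite ⊓ 𝓟 H.1)) s := by
  refine TopologicalSpace.nhds_mkOfNhds _ _ ?_ ?_
  · rintro (a | H)
    exacts [le_rfl, le_sup_left]
  · rintro (a | H) S hS
    exacts [hS, ⟨hS, hS.2⟩]

theorem nhds_symb_inl (a : A) : 𝓝 (Sum.inl a : Symb A V) = pure (.inl a) :=
  nhds_symb _

theorem nhds_symb_inr (H : {H : Set A // H ∈ V}) :
    𝓝 (Sum.inr H : Symb A V) = pure (.inr H) ⊔ map .inl (cofinite ⊓ 𝓟 H.1) :=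
  nhds_symb _

theorem mem_nhds_symb_inr {H : {H : Set A // H ∈ V}} {S : Set (Symb A V)} :
    S ∈ 𝓝 (Sum.inr H) ↔ Sum.inr H ∈ S ∧ (H.1 \ Sum.inl ⁻¹' S).Finite := by
  rw [nhds_symb_inr, mem_sup, mem_pure, mem_map, mem_inf_principal, mem_cofinite]
  simp only [sdiff_eq, compl_ofPred, Classical.not_imp]
  rfl

theorem isOpen_insert_inr_image_diff (H : {H : Set A // H ∈ V}) {F : Set A} (hF : F.Finite) :
    IsOpen (insert (Sum.inr H : Symb A V) (.inl '' (H.1 \ F))) := by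
  rw [isOpen_iff_mem_nhds]
  rintro (a | K) hs
  · rwa [nhds_symb_inl]
  · obtain rfl : K = H := by simpa using hs
    exact mem_nhds_symb_inr.2 ⟨hs, hF.subset fun a ha => by simpa [ha.1] using ha.2⟩

theorem isClosed_singleton_inl (a : A) : IsClosed {(Sum.inl a : Symb A V)} := by
  rw [← isOpen_compl_iff, isOpen_iff_mem_nhds]
  rintro (b | H) hne
  · rwa [nhds_symb_inl]
  · exact mem_nhds_symb_inr.2 ⟨hne, (finite_singleton a).subset fun b hb => by simpa using hb.2⟩

theorem isClosed_range_inr : IsClosed (range (Sum.inr : _ → Symb A V)) := by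
  rw [← isOpen_compl_iff, isOpen_iff_mem_nhds]
  rintro (a | H) hs
  · rwa [nhds_symb_inl]
  · exact absurd ⟨H, rfl⟩ hs

theorem isDiscrete_range_inr : IsDiscrete (range (Sum.inr : _ → Symb A V)) := by
  refine .of_nhdsWithin ?_
  rintro _ ⟨H, rfl⟩
  refine le_pure_iff.2 (mem_nhdsWithin_iff_eventually.2 (mem_nhds_symb_inr.2 ⟨fun _ => rfl, ?_⟩))
  simp

theorem isDiscrete_compl_range_inr : IsDiscrete (range (Sum.inr : _ → Symb A V))ᶜ := by
  refine .of_nhdsWithin ?_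
  rintro (a | H) hs
  · exact nhdsWithin_le_nhds.trans (nhds_symb_inl a).le
  · exact absurd ⟨H, rfl⟩ hs

theorem isCountablyGenerated_nhdsWithin_symb {T : Set (Symb A V)} (hT : T.Countable)
    (s : Symb A V) : (𝓝[T] s).IsCountablyGenerated := by
  rcases s with a | H
  · rw [nhdsWithin, nhds_symb_inl]
    infer_instance
  · have := isCountablyGenerated_cofinite_inf_principal
      (hT.preimage (Sum.inl_injective (α := A) (β := {H : Set A // H ∈ V})))
    rw [nhdsWithin, nhds_symb_inr, inf_sup_right, ← map_inf_principal_preimage, inf_right_comm]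
    infer_instance

/-- The topology `tau`. It is coarser than the one `FullBlur A V` inherits from the product of
copies of `symbTopology`, since neighborhoods of a point do not constrain the coordinates past its
first blur symbol; being declared last, it takes precedence over that instance. -/
local instance : TopologicalSpace (FullBlur A V) :=
  tau A V

theorem mem_Z_iff {α : List A} {x : FullBlur A V} :
    x ∈ Z A V α ↔ ∀ n (hn : n < α.length), x.1 n = .inl α[n] :=
  Fin.forall_iff

theorem Z_nil : Z A V [] = univ :=
  eq_univ_of_forall fun _ i => i.elim0

theorem Z_append_singleton (α : List A) (a : A) :
    Z A V (α ++ [a]) = Z A V α ∩ (fun x => x.1 α.length) ⁻¹' {.inl a} := by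
  ext x
  simp only [mem_inter_iff, mem_preimage, mem_singleton_iff, mem_Z_iff,
    List.length_append, List.length_singleton, Nat.forall_lt_succ_right']
  refine and_congr (forall₂_congr fun n hn => ?_) ?_
  · rw [List.getElem_append_left hn]
  · simp

theorem ZH_eq_inter_preimage (α : List A) (H : {H : Set A // H ∈ V}) (F : Set A) :
    ZH A V α H F = Z A V α ∩ (fun x => x.1 α.length) ⁻¹' insert (.inr H) (.inl '' (H.1 \ F)) := by
  ext x
  simp [ZH, Z, eq_comm]

theorem eval_eq_of_mem_Z {α : List A} {x y : FullBlur A V} (hx : x ∈ Z A V α) (hy : y ∈ Z A V α)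
    {n : ℕ} (hn : n < α.length) : x.1 n = y.1 n :=
  (hx ⟨n, hn⟩).trans (hy ⟨n, hn⟩).symm

theorem isOpen_Z (α : List A) : IsOpen (Z A V α) :=
  .basic _ (.inl ⟨α, rfl⟩)

theorem isOpen_ZH (α : List A) (H : {H : Set A // H ∈ V}) {F : Set A} (hFH : F ⊆ H.1)
    (hF : F.Finite) : IsOpen (ZH A V α H F) :=
  .basic _ (.inr ⟨α, H, F, hFH, hF, rfl⟩)

theorem continuousAt_eval_length {α : List A} {p : FullBlur A V} (hp : p ∈ Z A V α) :
    ContinuousAt (fun x : FullBlur A V => x.1 α.length) p := by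
  intro S (hS : S ∈ 𝓝 (p.1 α.length))
  rw [mem_map]
  rcases hs : p.1 α.length with a | H
  · rw [hs, nhds_symb_inl] at hS
    have hpa : p ∈ Z A V (α ++ [a]) := Z_append_singleton α a ▸ ⟨hp, hs⟩
    filter_upwards [(isOpen_Z _).mem_nhds hpa] with x hx
    rw [Z_append_singleton] at hx
    rwa [mem_preimage, show x.1 α.length = .inl a from hx.2]
  · rw [hs, mem_nhds_symb_inr] at hS
    have hpH : p ∈ ZH A V α H (H.1 \ Sum.inl ⁻¹' S) := ⟨hp, .inl hs⟩
    filter_upwards [(isOpen_ZH α H sdiff_subset hS.2).mem_nhds hpH] with x hx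
    rcases hx.2 with hx | ⟨a, ha, hx⟩ <;> rw [mem_preimage, hx]
    · exact hS.1
    · exact not_not.1 fun haS => ha.2 ⟨ha.1, haS⟩

theorem isClosed_Z (α : List A) : IsClosed (Z A V α) := by
  induction α using List.reverseRecOn with
  | nil => exact Z_nil ▸ isClosed_univ
  | append_singleton α a ih =>
    rw [Z_append_singleton]
    exact ContinuousOn.preimage_isClosed_of_isClosed
      (fun p hp => (continuousAt_eval_length hp).continuousWithinAt) ih (isClosed_singleton_inl a)

theorem nhds_eq_iInf_comap_eval (p : FullBlur A V) :
    𝓝 p = ⨅ α : {α : List A // p ∈ Z A V α},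
      comap (fun x => x.1 α.1.length) (𝓝 (p.1 α.1.length)) := by
  refine le_antisymm (le_iInf fun α => (continuousAt_eval_length α.2).tendsto.le_comap) ?_
  set f := ⨅ α : {α : List A // p ∈ Z A V α},
    comap (fun x : FullBlur A V => x.1 α.1.length) (𝓝 (p.1 α.1.length))
  have preimage_mem {α} (hα : p ∈ Z A V α) {S : Set (Symb A V)} (hS : S ∈ 𝓝 (p.1 α.length)) :
      (fun x : FullBlur A V => x.1 α.length) ⁻¹' S ∈ f :=
    mem_iInf_of_mem ⟨α, hα⟩ (preimage_mem_comap hS)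
  have Z_mem (α) (hα : p ∈ Z A V α) : Z A V α ∈ f := by
    induction α using List.reverseRecOn with
    | nil => exact Z_nil ▸ univ_mem
    | append_singleton α a ih =>
      rw [Z_append_singleton] at hα ⊢
      refine inter_mem (ih hα.1) (preimage_mem hα.1 ?_)
      rw [show p.1 α.length = .inl a from hα.2, nhds_symb_inl, mem_pure, mem_singleton_iff]
  refine (le_iInf₂ fun U hU => le_principal_iff.2 ?_).trans_eq
    TopologicalSpace.nhds_generateFrom.symm
  obtain ⟨hpU, ⟨α, rfl⟩ | ⟨α, H, F, -, hF, rfl⟩⟩ := hU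
  · exact Z_mem α hpU
  · rw [ZH_eq_inter_preimage] at hpU ⊢
    exact inter_mem (Z_mem α hpU.1)
      (preimage_mem hpU.1 ((isOpen_insert_inr_image_diff H hF).mem_nhds hpU.2))

theorem le_nhds_iff_tendsto_eval {f : Filter (FullBlur A V)} {p : FullBlur A V} :
    f ≤ 𝓝 p ↔ ∀ α, p ∈ Z A V α → Tendsto (fun x => x.1 α.length) f (𝓝 (p.1 α.length)) := by
  simp only [nhds_eq_iInf_comap_eval, le_iInf_iff, Subtype.forall, tendsto_iff_comap]

theorem countable_setOf_mem_Z (p : FullBlur A V) : {α : List A | p ∈ Z A V α}.Countable := by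
  refine MapsTo.countable_of_injOn (mapsTo_univ List.length _) (fun α hα β hβ hlen => ?_)
    countable_univ
  exact List.ext_getElem hlen fun n hnα hnβ =>
    Sum.inl_injective ((mem_Z_iff.1 hα n hnα).symm.trans (mem_Z_iff.1 hβ n hnβ))

theorem isCountablyGenerated_nhdsWithin {S : Set (FullBlur A V)} (hS : S.Countable)
    (p : FullBlur A V) : (𝓝[S] p).IsCountablyGenerated := by
  have := (countable_setOf_mem_Z p).to_subtype
  have hnhds : 𝓝[S] p = (⨅ α : {α : List A | p ∈ Z A V α}, comap (fun x => x.1 α.1.length)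
      (𝓝[(fun x => x.1 α.1.length) '' S] (p.1 α.1.length))) ⊓ 𝓟 S := by
    refine le_antisymm (le_inf (le_iInf fun α => ?_) inf_le_right) (inf_le_inf_right _ ?_)
    · exact (continuousAt_eval_length α.2).continuousWithinAt.tendsto_nhdsWithin_image.le_comap
    · rw [nhds_eq_iInf_comap_eval]
      exact iInf_mono fun α => comap_mono nhdsWithin_le_nhds
  have (n : ℕ) (s : Symb A V) := isCountablyGenerated_nhdsWithin_symb (hS.image (·.1 n)) s
  rw [hnhds]
  infer_instance

theorem isCompact_image_eval_length {X : Set (FullBlur A V)} (hX : IsCountablyCompact X)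
    (α : List A) : IsCompact ((fun x => x.1 α.length) '' (X ∩ Z A V α)) :=
  isCompact_of_isCountablyCompact_of_isDiscrete isClosed_range_inr isDiscrete_range_inr
    isDiscrete_compl_range_inr <|
      isCountablyCompact_image_of_continuousOn
        (isCountablyCompact_inter_of_isClosed hX (isClosed_Z α))
        fun _ hp => (continuousAt_eval_length hp.2).continuousWithinAt

theorem le_nhds_of_forall_mem_Z {f : Filter (FullBlur A V)} {p : FullBlur A V} {α : ℕ → List A}
    (hlen : ∀ n, (α n).length = n) (hp : ∀ n, p ∈ Z A V (α n)) (hf : ∀ n, Z A V (α n) ∈ f) :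
    f ≤ 𝓝 p := by
  refine le_nhds_iff_tendsto_eval.2 fun β _ => tendsto_nhds_of_eventually_eq ?_
  filter_upwards [hf (β.length + 1)] with x hx
  exact eval_eq_of_mem_Z hx (hp _) (by rw [hlen]; exact Nat.lt_succ_self _)

theorem le_nhds_of_eval_eq_inr {f : Filter (FullBlur A V)} {p : FullBlur A V} {α : List A}
    {H : {H : Set A // H ∈ V}} (hp : p ∈ Z A V α) (hpH : p.1 α.length = .inr H)
    (hα : Z A V α ∈ f) (hf : Tendsto (fun x => x.1 α.length) f (𝓝 (p.1 α.length))) :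
    f ≤ 𝓝 p := by
  refine le_nhds_iff_tendsto_eval.2 fun β hβ => ?_
  rcases lt_trichotomy β.length α.length with hlt | heq | hgt
  · refine tendsto_nhds_of_eventually_eq ?_
    filter_upwards [hα] with x hx
    exact eval_eq_of_mem_Z hx hp hlt
  · rwa [heq]
  · simp [mem_Z_iff.1 hβ _ hgt] at hpH

theorem exists_le_nhds_or_exists_Z_append_mem {X : Set (FullBlur A V)}
    (hX : IsCountablyCompact X) {U : Ultrafilter (FullBlur A V)} (hXU : X ∈ U) {α : List A}
    (hα : Z A V α ∈ U) : (∃ p ∈ X, ↑U ≤ 𝓝 p) ∨ ∃ a, Z A V (α ++ [a]) ∈ U := by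
  have himage : (fun x => x.1 α.length) '' (X ∩ Z A V α) ∈ U.map fun x => x.1 α.length :=
    image_mem_map (f := (U : Filter (FullBlur A V))) (inter_mem hXU hα)
  obtain ⟨_, ⟨p, ⟨hpX, hpα⟩, rfl⟩, hlim⟩ :=
    (isCompact_image_eval_length hX α).ultrafilter_le_nhds _ (le_principal_iff.2 himage)
  rcases hp : p.1 α.length with a | H
  · right
    rw [show (fun x : FullBlur A V => x.1 α.length) p = .inl a from hp, nhds_symb_inl] at hlim
    exact ⟨a, Z_append_singleton α a ▸ inter_mem hα (hlim rfl)⟩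
  · exact .inl ⟨p, hpX, le_nhds_of_eval_eq_inr hpα hp hα hlim⟩

theorem isCompact_of_isCountablyCompact {X : Set (FullBlur A V)} (hX : IsCountablyCompact X) :
    IsCompact X := by
  refine isCompact_iff_ultrafilter_le_nhds'.2 fun U hXU => ?_
  by_contra hU
  have hprefix (n : ℕ) : ∃ α : List A, α.length = n ∧ Z A V α ∈ U := by
    induction n with
    | zero => exact ⟨[], rfl, Z_nil ▸ univ_mem⟩
    | succ n ih =>
      obtain ⟨α, rfl, hα⟩ := ih
      obtain ⟨a, ha⟩ := (exists_le_nhds_or_exists_Z_append_mem hX hXU hα).resolve_left hU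
      exact ⟨α ++ [a], List.length_append, ha⟩
  choose α hlen hα using hprefix
  obtain ⟨p, hpX, hp⟩ := exists_mem_forall_mem_of_isClosed hX (fun n => isClosed_Z (α n)) hXU hα
  exact hU ⟨p, hpX, le_nhds_of_forall_mem_Z hlen hp hα⟩

theorem isCompact_iff_isSeqCompact_general (V : Set (Set A)) (X : Set (FullBlur A V)) :
    @IsCompact _ (tau A V) X ↔ @IsSeqCompact _ (tau A V) X where
  mp hX := isSeqCompact_of_isCountablyCompact
    (fun p _ _ _ hS => isCountablyGenerated_nhdsWithin hS p) hX.isCountablyCompact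
  mpr hX := isCompact_of_isCountablyCompact hX.isCountablyCompact

end BlurShift

/-- A subset of the full blur shift is compact if and only if it
is sequentially compact. -/
theorem isCompact_iff_isSeqCompact {A : Type*} (V : Set (Set A))
    (hV : IsBlurFamily V) (X : Set (FullBlur A V)) :
    @IsCompact _ (tau A V) X ↔ @IsSeqCompact _ (tau A V) X :=
  isCompact_iff_isSeqCompact_general V X

end BlurPaper
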